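/- Let G be an ample groupoid. For every n ≥ −1 (with the convention EG_{−1} := G^0), the map f ⊗ a ↦ ((g_0,…,g_{n+1}) ↦ f(g_0) a(g_0^{−1}g_1,…,g_0^{−1}g_{n+1})) is a well-defined isomorphism of left Z[G]-modules Z[G] ⊗_{Z[G^0]} Z[EG_n] ≅ Z[EG_{n+1}]. -/

import Mathlib

noncomputable section

open Function Set

attribute [local instance] Classical.propDecidable

universe u v w

/-- `ℤ[Y]`: the set of compactly supported continuous `ℤ`-valued functions on a space `Y`
(`ℤ` carries the discrete topology). -/
def ccZ (Y : Type v) [TopologicalSpace Y] : Set (Y → ℤ) :=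
  {f | Continuous f ∧ HasCompactSupport f}

/-- `ℤ[Y]` as an additive subgroup of the group of all functions `Y → ℤ`. -/
def ccZSub (Y : Type v) [TopologicalSpace Y] : AddSubgroup (Y → ℤ) where
  carrier := ccZ Y
  add_mem' {a b} ha hb := ⟨ha.1.add hb.1, ha.2.add hb.2⟩
  zero_mem' := ⟨continuous_const, by
    have h : tsupport (0 : Y → ℤ) = ∅ := by simp [tsupport]
    unfold HasCompactSupport
    rw [h]; exact isCompact_empty⟩
  neg_mem' {a} ha := ⟨ha.1.neg, ha.2.neg⟩

@[simp] lemma mem_ccZSub {Y : Type v} [TopologicalSpace Y] (f : Y → ℤ) :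
    f ∈ ccZSub Y ↔ f ∈ ccZ Y := Iff.rfl

/-- The pushforward `φ_*(a)(y) = ∑_{x ∈ φ⁻¹(y)} a x` of a function along a map. -/
def pushf {X : Type v} {Y : Type w} (φ : X → Y) (a : X → ℤ) : Y → ℤ :=
  fun y => ∑ᶠ x ∈ φ ⁻¹' {y}, a x

/-- The generated equivalence relation. -/
inductive RelGen {α : Sort*} (r : α → α → Prop) : α → α → Prop
  | rel {x y} : r x y → RelGen r x y
  | refl (x) : RelGen r x x
  | symm {x y} : RelGen r x y → RelGen r y x
  | trans {x y z} : RelGen r x y → RelGen r y z → RelGen r x z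

/-- The purely algebraic data of a topological groupoid, with arrow space `G`:
the set of units, source and range maps (valued in units), a (junk-total)
partially defined composition, and inversion. -/
structure GroupoidData (G : Type u) where
  unitSpace : Set G
  source : G → G
  range : G → G
  mul : G → G → G
  inv : G → G

namespace GroupoidData

variable {G : Type u} (D : GroupoidData G)

/-- The product of two subsets of a groupoid. -/
def setMul (A B : Set G) : Set G :=
  {w | ∃ a ∈ A, ∃ b ∈ B, D.source a = D.range b ∧ w = D.mul a b}

/-- A bisection: a subset on which both the source and the range map are injective. -/
def IsBisection (B : Set G) : Prop := Set.InjOn D.source B ∧ Set.InjOn D.range B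

/-- Membership in the subgroupoid generated by a subset `A` of `G`. -/
inductive InSubgroupoid (A : Set G) : G → Prop
  | base {g} : g ∈ A → InSubgroupoid A g
  | inv {g} : InSubgroupoid A g → InSubgroupoid A (D.inv g)
  | mul {g h} : InSubgroupoid A g → InSubgroupoid A h → D.source g = D.range h →
      InSubgroupoid A (D.mul g h)

/-- `G` is a (locally compact, Hausdorff, étale) ample groupoid: all the algebraic groupoid
axioms hold, the structure maps are suitably continuous, the source and range maps are local
homeomorphisms onto the open unit space (étaleness), and the compact open bisections form a
basis for the topology (ampleness). -/
structure IsAmpleGroupoid [TopologicalSpace G] : Prop where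
  t2 : T2Space G
  locallyCompact : LocallyCompactSpace G
  source_mem : ∀ g, D.source g ∈ D.unitSpace
  range_mem : ∀ g, D.range g ∈ D.unitSpace
  source_unit : ∀ x ∈ D.unitSpace, D.source x = x
  range_unit : ∀ x ∈ D.unitSpace, D.range x = x
  source_mul : ∀ g h, D.source g = D.range h → D.source (D.mul g h) = D.source h
  range_mul : ∀ g h, D.source g = D.range h → D.range (D.mul g h) = D.range g
  mul_assoc : ∀ g h k, D.source g = D.range h → D.source h = D.range k →
      D.mul (D.mul g h) k = D.mul g (D.mul h k)
  source_inv : ∀ g, D.source (D.inv g) = D.range g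
  range_inv : ∀ g, D.range (D.inv g) = D.source g
  inv_mul : ∀ g, D.mul (D.inv g) g = D.source g
  mul_inv : ∀ g, D.mul g (D.inv g) = D.range g
  unit_mul : ∀ g, D.mul (D.range g) g = g
  mul_unit : ∀ g, D.mul g (D.source g) = g
  continuous_inv : Continuous D.inv
  continuous_mul : Continuous fun p : {p : G × G // D.source p.1 = D.range p.2} =>
      D.mul p.1.1 p.1.2
  open_unitSpace : IsOpen D.unitSpace
  etale_source : IsLocalHomeomorph D.source
  etale_range : IsLocalHomeomorph D.range
  ample : ∀ g : G, ∀ U : Set G, IsOpen U → g ∈ U →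
      ∃ B : Set G, g ∈ B ∧ B ⊆ U ∧ IsOpen B ∧ IsCompact B ∧ D.IsBisection B

/-- A groupoid is principal if every arrow with equal range and source is a unit. -/
def IsPrincipal : Prop := ∀ g, D.source g = D.range g → g ∈ D.unitSpace

/-- `G` has dynamic asymptotic dimension at most `d`: for every relatively compact open
subset `K` of `G` there are `d+1` open subsets of the unit space covering `r(K) ∪ s(K)` such
that the subgroupoid generated by the elements of `K` with source and range in one of these
sets is relatively compact. -/
def DadLE [TopologicalSpace G] (d : ℕ) : Prop :=
  ∀ K : Set G, IsOpen K → IsCompact (closure K) →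
    ∃ U : Fin (d + 1) → Set G,
      (∀ i, IsOpen (U i) ∧ U i ⊆ D.unitSpace) ∧
      (D.range '' K ∪ D.source '' K ⊆ ⋃ i, U i) ∧
      ∀ i, IsCompact (closure
        {g | D.InSubgroupoid {g ∈ K | D.source g ∈ U i ∧ D.range g ∈ U i} g})

/-! ### Matui's complex computing the Crainic–Moerdijk groupoid homology `H_*(G)` -/

/-- The space `G^(n)` of composable `n`-tuples. -/
def Comps (n : ℕ) : Set (Fin n → G) :=
  {v | ∀ (j : Fin n) (h : (j : ℕ) + 1 < n), D.source (v j) = D.range (v ⟨(j : ℕ) + 1, h⟩)}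

/-- The face maps of Matui's complex on tuples:
`d_0` drops the first entry, `d_{n+1}` drops the last one, and the intermediate
`d_i` compose two consecutive entries. -/
def dface (n : ℕ) (i : Fin (n + 2)) (v : Fin (n + 1) → G) : Fin n → G := fun j =>
  if (j : ℕ) + 1 < (i : ℕ) then v j.castSucc
  else if (j : ℕ) + 1 = (i : ℕ) then D.mul (v j.castSucc) (v j.succ)
  else v j.succ

/-- The spaces of Matui's complex: `G^0` in degree `0`, and `G^(n)` in degree `n ≥ 1`. -/
def MSp : ℕ → Type u
  | 0 => ↥(D.unitSpace)
  | (n + 1) => ↥(D.Comps (n + 1))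

instance [TopologicalSpace G] (n : ℕ) : TopologicalSpace (D.MSp n) := by
  cases n with
  | zero => exact (inferInstance : TopologicalSpace ↥(D.unitSpace))
  | succ n => exact (inferInstance : TopologicalSpace ↥(D.Comps (n + 1)))

/-- The boundary maps of Matui's complex, given by alternating sums of pushforwards
along the face maps (in degree one, `∂₁ = s_* - r_*`). -/
def mBdry : (n : ℕ) → ((D.MSp (n + 1)) → ℤ) → (D.MSp n) → ℤ
  | 0, a => fun u =>
      (∑ᶠ x ∈ {x : ↥(D.Comps 1) | D.source (x.1 0) = u.1}, a x)
        - ∑ᶠ x ∈ {x : ↥(D.Comps 1) | D.range (x.1 0) = u.1}, a x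
  | (n + 1), a => fun y =>
      ∑ i : Fin (n + 3), (-1 : ℤ) ^ (i : ℕ) *
        ∑ᶠ x ∈ {x : ↥(D.Comps (n + 2)) | D.dface (n + 1) i x.1 = y.1}, a x

variable [TopologicalSpace G]

/-- The cycle subgroup of Matui's complex in degree `n`. -/
def mCycles : (n : ℕ) → AddSubgroup ((D.MSp n) → ℤ)
  | 0 => ccZSub (D.MSp 0)
  | (n + 1) => AddSubgroup.closure {a | a ∈ ccZ (D.MSp (n + 1)) ∧ D.mBdry n a = 0}

/-- The boundary subgroup of Matui's complex in degree `n`. -/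
def mBdries (n : ℕ) : AddSubgroup ((D.MSp n) → ℤ) :=
  AddSubgroup.closure {c | ∃ a ∈ ccZ (D.MSp (n + 1)), D.mBdry n a = c}

/-- The groupoid homology `H_n(G)` (Crainic–Moerdijk homology, computed by Matui's complex). -/
def Homology (n : ℕ) : Type u :=
  (D.mCycles n) ⧸ AddSubgroup.comap (D.mCycles n).subtype (D.mBdries n)

instance (n : ℕ) : AddCommGroup (D.Homology n) :=
  QuotientAddGroup.Quotient.addCommGroup _

/-- The homology class of a cycle. -/
def hcls {n : ℕ} (a : (D.MSp n) → ℤ) (ha : a ∈ D.mCycles n) : D.Homology n :=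
  QuotientAddGroup.mk ⟨a, ha⟩

end GroupoidData
namespace GroupoidData

variable {G : Type u} (D : GroupoidData G)

/-! ### The semi-simplicial `G`-space `EG_*` -/

/-- The space `EG_n` of `(n+1)`-tuples of arrows with a common range. -/
def EGset (n : ℕ) : Set (Fin (n + 1) → G) :=
  {g | ∀ i j, D.range (g i) = D.range (g j)}

/-- The face maps of `EG_*` delete one entry of a tuple. -/
def egFace (n : ℕ) (i : Fin (n + 2)) (x : D.EGset (n + 1)) : D.EGset n :=
  ⟨fun j => x.1 (i.succAbove j), fun j k => x.2 (i.succAbove j) (i.succAbove k)⟩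

/-- The boundary map `∂ = ∑ (-1)^i (∂^i)_*` on `ℤ[EG_*]`. -/
def egBdry [TopologicalSpace G] (n : ℕ) (a : D.EGset (n + 1) → ℤ) : D.EGset n → ℤ :=
  fun y => ∑ i : Fin (n + 2), (-1 : ℤ) ^ (i : ℕ) *
    ∑ᶠ x ∈ {x : ↥(D.EGset (n + 1)) | D.egFace n i x = y}, a x

/-- The anchor map of `EG_n`: the common range of the entries of a tuple. -/
def egAnchor (n : ℕ) (x : D.EGset n) : G := D.range (x.1 0)

/-- The (diagonal, left-translation) action of `G` on `EG_n`. -/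
def egTranslate (n : ℕ) (g : G) (x : D.EGset n) : D.EGset n :=
  if h : (fun i => D.mul g (x.1 i)) ∈ D.EGset n then ⟨_, h⟩ else x

/-- The module action `(f·a)(x) = ∑_{g ∈ G^{p(x)}} f(g) a(g⁻¹·x)` of `ℤ[G]` on `ℤ[EG_n]`. -/
def egActFun (n : ℕ) (f : G → ℤ) (a : D.EGset n → ℤ) : D.EGset n → ℤ :=
  fun x => ∑ᶠ g : G,
    if D.range g = D.egAnchor n x then f g * a (D.egTranslate n (D.inv g) x) else 0

/-- The action of the augmentation `ε(f) ∈ ℤ[G⁰]` on `ℤ[EG_n]`. -/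
def egEpsFun (n : ℕ) (f : G → ℤ) (a : D.EGset n → ℤ) : D.EGset n → ℤ :=
  fun x => (∑ᶠ g ∈ {g : G | D.source g = D.egAnchor n x}, f g) * a x

/-- `ℤ[G⁰]`: the compactly supported continuous integer-valued functions on `G` that are
supported on the unit space, as a subgroup of `G → ℤ`. -/
def zUnit [TopologicalSpace G] : AddSubgroup (G → ℤ) where
  carrier := {f | f ∈ ccZ G ∧ ∀ g, f g ≠ 0 → g ∈ D.unitSpace}
  add_mem' {a b} ha hb := ⟨(ccZSub G).add_mem ha.1 hb.1, fun g hg => by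
    by_cases h : a g = 0
    · exact hb.2 g (by simpa [Pi.add_apply, h] using hg)
    · exact ha.2 g h⟩
  zero_mem' := ⟨(ccZSub G).zero_mem, fun g hg => absurd rfl hg⟩
  neg_mem' {a} ha := ⟨(ccZSub G).neg_mem ha.1, fun g hg => ha.2 g (by simpa using hg)⟩

/-- The augmentation map `ε : ℤ[G] → ℤ[G⁰]`, `ε(f)(x) = ∑_{g ∈ G_x} f(g)`. -/
def epsZ [TopologicalSpace G] (f : G → ℤ) : G → ℤ := fun x =>
  if x ∈ D.unitSpace then ∑ᶠ g ∈ {g : G | D.source g = x}, f g else 0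

/-- The convolution product on `ℤ[G]`. -/
def convZ (f f' : G → ℤ) : G → ℤ := fun g =>
  ∑ᶠ h : G, if D.range h = D.range g then f h * f' (D.mul (D.inv h) g) else 0

end GroupoidData
namespace GroupoidData

variable {G : Type u} [TopologicalSpace G] (D : GroupoidData G)

/-- A (left) module over the convolution ring `ℤ[G]`: an abelian group `M` together with an
action of the functions `G → ℤ`, which is biadditive and multiplicative on `ℤ[G]`. -/
structure GMod (M : Type u) [AddCommGroup M] where
  smul : (G → ℤ) → M → M
  smul_add : ∀ f, f ∈ ccZ G → ∀ m m' : M, smul f (m + m') = smul f m + smul f m'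
  add_smul : ∀ f f', f ∈ ccZ G → f' ∈ ccZ G → ∀ m, smul (f + f') m = smul f m + smul f' m
  mul_smul : ∀ f f', f ∈ ccZ G → f' ∈ ccZ G → ∀ m,
    smul (D.convZ f f') m = smul f (smul f' m)

/-- Non-degeneracy of a `ℤ[G]`-module: `ℤ[G]·M = M`. -/
def GMod.Nondeg {D : GroupoidData G} {M : Type u} [AddCommGroup M] (σ : D.GMod M) : Prop :=
  ∀ m : M, ∃ (k : ℕ) (f : Fin k → (G → ℤ)) (v : Fin k → M),
    (∀ i, f i ∈ ccZ G) ∧ m = ∑ i, σ.smul (f i) (v i)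

/-- Morphisms of `ℤ[G]`-modules. -/
def IsGModHom {M N : Type u} [AddCommGroup M] [AddCommGroup N]
    (σM : D.GMod M) (σN : D.GMod N) (φ : M → N) : Prop :=
  (∀ a b, φ (a + b) = φ a + φ b) ∧
    ∀ f, f ∈ ccZ G → ∀ m, φ (σM.smul f m) = σN.smul f (φ m)

/-- A non-degenerate `ℤ[G]`-module is projective if every morphism from it to a quotient of
non-degenerate modules lifts. -/
def IsProjGMod (P : Type u) [AddCommGroup P] (σP : D.GMod P) : Prop :=
  ∀ (M N : Type u) (_ : AddCommGroup M) (_ : AddCommGroup N)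
    (σM : D.GMod M) (σN : D.GMod N), σM.Nondeg → σN.Nondeg →
    ∀ π : M → N, D.IsGModHom σM σN π → Function.Surjective π →
      ∀ φ : P → N, D.IsGModHom σP σN φ →
        ∃ ψ : P → M, D.IsGModHom σP σM ψ ∧ π ∘ ψ = φ

/-- The subgroup of a `ℤ[G]`-module generated by the elements `f·m - ε(f)·m`. -/
def GMod.coinvRel {D : GroupoidData G} {M : Type u} [AddCommGroup M] (σ : D.GMod M) :
    AddSubgroup M :=
  AddSubgroup.closure {z | ∃ f m, f ∈ ccZ G ∧ z = σ.smul f m - σ.smul (D.epsZ f) m}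

/-- The coinvariants `M_G = M / ⟨f·m - ε(f)·m⟩` of a `ℤ[G]`-module. -/
def GMod.Coinv {D : GroupoidData G} {M : Type u} [AddCommGroup M] (σ : D.GMod M) : Type u :=
  M ⧸ σ.coinvRel

instance {D : GroupoidData G} {M : Type u} [AddCommGroup M] (σ : D.GMod M) :
    AddCommGroup σ.Coinv :=
  QuotientAddGroup.Quotient.addCommGroup _

/-- The class of an element of `M` in the coinvariants `M_G`. -/
def GMod.coinvCls {D : GroupoidData G} {M : Type u} [AddCommGroup M] (σ : D.GMod M) (m : M) :
    σ.Coinv :=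
  QuotientAddGroup.mk m

/-- The right action `a·f := ε(af)` of `ℤ[G]` on `ℤ[G⁰]`. -/
def ractZ (a f : G → ℤ) : G → ℤ := fun x =>
  if x ∈ D.unitSpace then ∑ᶠ g ∈ {g : G | D.source g = x}, a (D.range g) * f g else 0

/-- Packaging of a function as an element of `ℤ[G⁰]` (zero if it does not belong to it). -/
def packUnit (f : G → ℤ) : ↥(D.zUnit) := if h : f ∈ D.zUnit then ⟨f, h⟩ else 0

/-- Packaging of a function as an element of `ℤ[Y]` (zero if it does not belong to it). -/
def packCc (Y : Type v) [TopologicalSpace Y] (f : Y → ℤ) : ↥(ccZSub Y) :=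
  if h : f ∈ ccZSub Y then ⟨f, h⟩ else 0

/-- The relations defining the balanced tensor product `ℤ[G⁰] ⊗_{ℤ[G]} M`. -/
def torRel {M : Type u} [AddCommGroup M] (σ : D.GMod M) :
    AddSubgroup (TensorProduct ℤ ↥(D.zUnit) M) :=
  AddSubgroup.closure {z | ∃ (a : ↥(D.zUnit)) (f : G → ℤ) (m : M), f ∈ ccZ G ∧
    z = D.packUnit (D.ractZ a.1 f) ⊗ₜ[ℤ] m - a ⊗ₜ[ℤ] (σ.smul f m)}

/-- The balanced tensor product `ℤ[G⁰] ⊗_{ℤ[G]} M`. -/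
def TensorCoinv {M : Type u} [AddCommGroup M] (σ : D.GMod M) : Type u :=
  (TensorProduct ℤ ↥(D.zUnit) M) ⧸ D.torRel σ

instance {M : Type u} [AddCommGroup M] (σ : D.GMod M) : AddCommGroup (D.TensorCoinv σ) :=
  QuotientAddGroup.Quotient.addCommGroup _

/-- The class of a tensor in `ℤ[G⁰] ⊗_{ℤ[G]} M`. -/
def tcls {M : Type u} [AddCommGroup M] (σ : D.GMod M)
    (z : TensorProduct ℤ ↥(D.zUnit) M) : D.TensorCoinv σ :=
  QuotientAddGroup.mk z

/-- A module over `ℤ[G⁰]`. -/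
structure UMod (M : Type u) [AddCommGroup M] where
  smul : (G → ℤ) → M → M
  smul_add : ∀ f, f ∈ D.zUnit → ∀ m m' : M, smul f (m + m') = smul f m + smul f m'
  add_smul : ∀ f f', f ∈ D.zUnit → f' ∈ D.zUnit → ∀ m,
    smul (f + f') m = smul f m + smul f' m
  mul_smul : ∀ f f', f ∈ D.zUnit → f' ∈ D.zUnit → ∀ m,
    smul (D.convZ f f') m = smul f (smul f' m)

/-- Non-degeneracy of a `ℤ[G⁰]`-module. -/
def UMod.Nondeg {D : GroupoidData G} {M : Type u} [AddCommGroup M] (σ : D.UMod M) : Prop :=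
  ∀ m : M, ∃ (k : ℕ) (f : Fin k → (G → ℤ)) (v : Fin k → M),
    (∀ i, f i ∈ D.zUnit) ∧ m = ∑ i, σ.smul (f i) (v i)

/-- Morphisms of `ℤ[G⁰]`-modules. -/
def IsUModHom {M N : Type u} [AddCommGroup M] [AddCommGroup N]
    (σM : D.UMod M) (σN : D.UMod N) (φ : M → N) : Prop :=
  (∀ a b, φ (a + b) = φ a + φ b) ∧
    ∀ f, f ∈ D.zUnit → ∀ m, φ (σM.smul f m) = σN.smul f (φ m)

/-- Projectivity of a non-degenerate `ℤ[G⁰]`-module. -/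
def IsProjUMod (P : Type u) [AddCommGroup P] (σP : D.UMod P) : Prop :=
  ∀ (M N : Type u) (_ : AddCommGroup M) (_ : AddCommGroup N)
    (σM : D.UMod M) (σN : D.UMod N), σM.Nondeg → σN.Nondeg →
    ∀ π : M → N, D.IsUModHom σM σN π → Function.Surjective π →
      ∀ φ : P → N, D.IsUModHom σP σN φ →
        ∃ ψ : P → M, D.IsUModHom σP σM ψ ∧ π ∘ ψ = φ

end GroupoidData
namespace GroupoidData

variable {G : Type u} [TopologicalSpace G] (D : GroupoidData G)

open scoped TensorProduct

/-- The relations defining the balanced tensor product `ℤ[G] ⊗_{ℤ[G⁰]} ℤ[EG_n]`, where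
`ℤ[G]` carries the right `ℤ[G⁰]`-action `(fφ)(g) = f(g)φ(s(g))` and `ℤ[EG_n]` the left
`ℤ[G⁰]`-action `(φa)(g_0, …, g_n) = φ(r(g_0)) a(g_0, …, g_n)`. -/
def tensorEGRel (n : ℕ) :
    AddSubgroup (TensorProduct ℤ ↥(ccZSub G) ↥(ccZSub ↥(D.EGset n))) :=
  AddSubgroup.closure
    {z | ∃ (f : ↥(ccZSub G)) (φ : G → ℤ) (a : ↥(ccZSub ↥(D.EGset n))), φ ∈ D.zUnit ∧
      z = GroupoidData.packCc G (fun g => f.1 g * φ (D.source g)) ⊗ₜ[ℤ] a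
          - f ⊗ₜ[ℤ] GroupoidData.packCc ↥(D.EGset n) (fun x => φ (D.range (x.1 0)) * a.1 x)}

/-- The balanced tensor product `ℤ[G] ⊗_{ℤ[G⁰]} ℤ[EG_n]`. -/
def TensorEG (n : ℕ) : Type u :=
  (TensorProduct ℤ ↥(ccZSub G) ↥(ccZSub ↥(D.EGset n))) ⧸ D.tensorEGRel n

instance (n : ℕ) : AddCommGroup (D.TensorEG n) :=
  QuotientAddGroup.Quotient.addCommGroup _

/-- The class of a tensor in `ℤ[G] ⊗_{ℤ[G⁰]} ℤ[EG_n]`. -/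
def tegCls (n : ℕ) (z : TensorProduct ℤ ↥(ccZSub G) ↥(ccZSub ↥(D.EGset n))) :
    D.TensorEG n :=
  QuotientAddGroup.mk z

/-- The relations defining the balanced tensor product `ℤ[G] ⊗_{ℤ[G⁰]} ℤ[G⁰]`
(the case `n = -1`, with `EG_{-1} := G⁰`). -/
def tensorBaseRel : AddSubgroup (TensorProduct ℤ ↥(ccZSub G) ↥(D.zUnit)) :=
  AddSubgroup.closure
    {z | ∃ (f : ↥(ccZSub G)) (φ : G → ℤ) (a : ↥(D.zUnit)), φ ∈ D.zUnit ∧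
      z = GroupoidData.packCc G (fun g => f.1 g * φ (D.source g)) ⊗ₜ[ℤ] a
          - f ⊗ₜ[ℤ] D.packUnit (fun x => φ x * a.1 x)}

/-- The balanced tensor product `ℤ[G] ⊗_{ℤ[G⁰]} ℤ[G⁰]`. -/
def TensorBase : Type u :=
  (TensorProduct ℤ ↥(ccZSub G) ↥(D.zUnit)) ⧸ D.tensorBaseRel

instance : AddCommGroup D.TensorBase := QuotientAddGroup.Quotient.addCommGroup _

def tbCls (z : TensorProduct ℤ ↥(ccZSub G) ↥(D.zUnit)) : D.TensorBase :=
  QuotientAddGroup.mk z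

end GroupoidData

/-!
The map `(g_0, …, g_{n+1}) ↦ (g_0, (g_0⁻¹g_1, …, g_0⁻¹g_{n+1}))` is a homeomorphism from `EG_{n+1}`
onto the fibre product `G ×_{s, r} EG_n`, so it suffices to identify `ℤ[A] ⊗_{ℤ[X]} ℤ[Y]` with
`ℤ[A ×_X Y]` for an étale map `t : A → X` of totally disconnected spaces and a map `Y → X`.
Both sides decompose over clopen sets `L ⊆ A` on which `t` is injective. Over such an `L`, a
function `f` on `A` is `1_L` times the pullback of its pushforward along `t`, so balancing turns
every tensor into the form `1_L ⊗ a` with `a` supported over `t(L)`; and `L ×_X Y` embeds into `Y`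
as the part lying over `t(L)`, so functions on `L ×_X Y` are exactly those functions `a`.
-/

section CompactSupport

open scoped TensorProduct

variable {Y : Type*} [TopologicalSpace Y]

theorem isClopen_support_of_mem_ccZ {f : Y → ℤ} (hf : f ∈ ccZ Y) : IsClopen (support f) :=
  (isClopen_discrete ({0}ᶜ : Set ℤ)).preimage hf.1

theorem isCompact_support_of_mem_ccZ {f : Y → ℤ} (hf : f ∈ ccZ Y) : IsCompact (support f) :=
  (isClopen_support_of_mem_ccZ hf).isClosed.closure_eq ▸ hf.2

theorem mul_mem_ccZ_left {f g : Y → ℤ} (hf : f ∈ ccZ Y) (hg : Continuous g) : f * g ∈ ccZ Y :=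
  ⟨hf.1.mul hg, hf.2.mul_right⟩

theorem mul_mem_ccZ_right {f g : Y → ℤ} (hf : Continuous f) (hg : g ∈ ccZ Y) : f * g ∈ ccZ Y :=
  ⟨hf.mul hg.1, hg.2.mul_left⟩

theorem indicator_mem_ccZ {L : Set Y} (hL : IsClopen L) {f : Y → ℤ} (hf : f ∈ ccZ Y) :
    L.indicator f ∈ ccZ Y :=
  ⟨hL.continuous_indicator hf.1, hf.2.mono (support_indicator.trans_subset inter_subset_right)⟩

theorem comp_mem_ccZ {Z : Type*} [TopologicalSpace Z] {e : Z → Y}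
    (he : Topology.IsClosedEmbedding e) {f : Y → ℤ} (hf : f ∈ ccZ Y) : f ∘ e ∈ ccZ Z :=
  ⟨hf.1.comp he.continuous, hf.2.comp_isClosedEmbedding he⟩

theorem prod_mul_mem_ccZ {A : Type*} [TopologicalSpace A] {f : A → ℤ} {a : Y → ℤ}
    (hf : f ∈ ccZ A) (ha : a ∈ ccZ Y) : (fun q : A × Y => f q.1 * a q.2) ∈ ccZ (A × Y) := by
  refine ⟨(hf.1.comp continuous_fst).mul (ha.1.comp continuous_snd),
    .intro' (hf.2.prod ha.2) ((isClosed_tsupport f).prod (isClosed_tsupport a)) fun q hq => ?_⟩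
  contrapose! hq
  exact ⟨subset_tsupport f (left_ne_zero_of_mul hq), subset_tsupport a (right_ne_zero_of_mul hq)⟩

/-- The characteristic function of a compact clopen set, as an element of `ℤ[Y]`. -/
def charCc (L : Set Y) (hL : IsClopen L) (hLc : IsCompact L) : ccZSub Y :=
  ⟨L.indicator 1, hL.continuous_indicator continuous_one,
    .intro' hLc hL.isClosed fun _ hx => indicator_of_notMem hx _⟩

/-- Pointwise multiplication on `ℤ[Y]`. -/
def mulCc : ccZSub Y →ₗ[ℤ] ccZSub Y →ₗ[ℤ] ccZSub Y :=
  LinearMap.mk₂ ℤ (fun F f => ⟨F.1 * f.1, mul_mem_ccZ_left F.2 f.2.1⟩)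
    (fun _ _ _ => Subtype.ext (add_mul _ _ _)) (fun _ _ _ => Subtype.ext (smul_mul_assoc _ _ _))
    (fun _ _ _ => Subtype.ext (mul_add _ _ _)) (fun _ _ _ => Subtype.ext (mul_smul_comm _ _ _))

theorem coe_mulCc (F f : ccZSub Y) : (mulCc F f).1 = F.1 * f.1 := rfl

/-- The isomorphism `ℤ[Y] ≅ ℤ[Z]` induced by a homeomorphism `Z ≃ₜ Y`. -/
def ccZSubCongr {Z : Type*} [TopologicalSpace Z] (e : Z ≃ₜ Y) : ccZSub Y ≃+ ccZSub Z where
  toFun f := ⟨f.1 ∘ e, comp_mem_ccZ e.isClosedEmbedding f.2⟩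
  invFun f := ⟨f.1 ∘ e.symm, comp_mem_ccZ e.symm.isClosedEmbedding f.2⟩
  left_inv f := Subtype.ext (by simp [comp_assoc])
  right_inv f := Subtype.ext (by simp [comp_assoc])
  map_add' _ _ := rfl

theorem ccZSub_induction {P : ccZSub Y → Prop} (zero : P 0)
    (add : ∀ F F', P F → P F' → P (F + F'))
    (clopen : ∀ y, ∃ L, IsClopen L ∧ y ∈ L ∧ ∀ F : ccZSub Y, support F.1 ⊆ L → P F)
    (F : ccZSub Y) : P F := by
  suffices ∃ L, IsClopen L ∧ support F.1 ⊆ L ∧ ∀ F' : ccZSub Y, support F'.1 ⊆ L → P F' from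
    let ⟨_, _, hFL, hL⟩ := this; hL F hFL
  refine (isCompact_support_of_mem_ccZ F.2).induction_on
    (p := fun s => ∃ L, IsClopen L ∧ s ⊆ L ∧ ∀ F' : ccZSub Y, support F'.1 ⊆ L → P F') ?_ ?_ ?_ ?_
  · refine ⟨∅, isClopen_empty, subset_rfl, fun F' hF' => ?_⟩
    rwa [show F' = 0 from Subtype.ext (support_eq_empty_iff.1 (subset_empty_iff.1 hF'))]
  · rintro s t hst ⟨L, hL, htL, h⟩
    exact ⟨L, hL, hst.trans htL, h⟩
  · rintro s t ⟨L, hL, hsL, h⟩ ⟨L', hL', htL', h'⟩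
    refine ⟨L ∪ L', hL.union hL', union_subset_union hsL htL', fun F' hF' => ?_⟩
    let F₁ : ccZSub Y := ⟨L.indicator F'.1, indicator_mem_ccZ hL F'.2⟩
    let F₂ : ccZSub Y := ⟨Lᶜ.indicator F'.1, indicator_mem_ccZ hL.compl F'.2⟩
    have hsplit : F₁ + F₂ = F' := Subtype.ext (indicator_self_add_compl L F'.1)
    rw [← hsplit]
    refine add _ _ (h _ support_indicator_subset) (h' _ ?_)
    rw [support_indicator]
    exact fun y hy => (hF' hy.2).resolve_left hy.1
  · intro y _
    obtain ⟨L, hL, hy, h⟩ := clopen y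
    exact ⟨L, mem_nhdsWithin_of_mem_nhds (hL.isOpen.mem_nhds hy), L, hL, subset_rfl, h⟩

theorem exists_rTensor_mulCc_eq_self {M : Type*} [AddCommGroup M]
    (x : ccZSub Y ⊗[ℤ] M) :
    ∃ F : ccZSub Y, (mulCc F).rTensor M x = x := by
  suffices ∃ L, IsClopen L ∧ IsCompact L ∧
      ∀ F : ccZSub Y, EqOn F.1 1 L → (mulCc F).rTensor M x = x by
    obtain ⟨L, hL, hLc, h⟩ := this
    exact ⟨charCc L hL hLc, h _ fun _ hg => indicator_of_mem hg _⟩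
  induction x with
  | zero => exact ⟨∅, isClopen_empty, isCompact_empty, fun _ _ => map_zero _⟩
  | tmul f a =>
    refine ⟨support f.1, isClopen_support_of_mem_ccZ f.2, isCompact_support_of_mem_ccZ f.2,
      fun F hF => ?_⟩
    have hFf : mulCc F f = f := Subtype.ext <| funext fun g => by
      by_cases hg : f.1 g = 0
      · simp [coe_mulCc, hg]
      · simp [coe_mulCc, hF hg]
    rw [LinearMap.rTensor_tmul, hFf]
  | add x y hx hy =>
    obtain ⟨L, hL, hLc, hx⟩ := hx
    obtain ⟨L', hL', hLc', hy⟩ := hy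
    refine ⟨L ∪ L', hL.union hL', hLc.union hLc', fun F hF => ?_⟩
    rw [map_add, hx F (hF.mono subset_union_left), hy F (hF.mono subset_union_right)]

end CompactSupport

section Pushforward

variable {A X Y : Type*} {t : A → X} {p : Y → X}

theorem support_pushf_subset (t : A → X) (f : A → ℤ) : support (pushf t f) ⊆ t '' support f :=
  fun _ h =>
    let ⟨g, hgx, hg⟩ := exists_ne_zero_of_finsum_mem_ne_zero h
    ⟨g, hg, hgx⟩

theorem pushf_apply_of_injOn {f : A → ℤ} {L : Set A} (hinj : InjOn t L)
    (hf : support f ⊆ L) {g : A} (hg : g ∈ L) : pushf t f (t g) = f g := by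
  have hfibre : t ⁻¹' {t g} ∩ support f = {g} ∩ support f := by
    ext h
    refine and_congr_left fun hh => ⟨fun e => hinj (hf hh) hg e, ?_⟩
    rintro rfl
    rfl
  rw [pushf, finsum_mem_inter_support_eq _ _ _ hfibre, finsum_mem_singleton]

theorem injOn_pullback_snd {L : Set A} (hL : InjOn t L) :
    InjOn (Pullback.snd : t.Pullback p → Y) (Pullback.fst ⁻¹' L) := fun z hz w hw hzw =>
  Subtype.ext (Prod.ext (hL hz hw ((z.2.trans (congrArg p hzw)).trans w.2.symm)) hzw)

variable [TopologicalSpace A] [TopologicalSpace X] [TopologicalSpace Y]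

theorem isOpenMap_pullback_snd (ht : IsOpenMap t) (hp : Continuous p) :
    IsOpenMap (Pullback.snd : t.Pullback p → Y) := by
  rintro _ ⟨W, hW, rfl⟩
  rw [isOpen_iff_mem_nhds]
  rintro _ ⟨z, hz, rfl⟩
  obtain ⟨B, V, hB, hzB, hV, hzV, hBV⟩ := mem_nhds_prod_iff'.1 (hW.mem_nhds hz)
  have hnhds : V ∩ p ⁻¹' (t '' B) ∈ nhds z.snd :=
    (hV.inter ((ht B hB).preimage hp)).mem_nhds ⟨hzV, z.fst, hzB, z.2⟩
  refine Filter.mem_of_superset hnhds ?_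
  rintro y ⟨hyV, g, hgB, hgy⟩
  exact ⟨⟨(g, y), hgy⟩, hBV ⟨hgB, hyV⟩, rfl⟩

theorem pushf_mem_ccZ_of_injOn [T2Space X] (ht : Continuous t) (hto : IsOpenMap t) {f : A → ℤ}
    (hf : f ∈ ccZ A) (hinj : InjOn t (support f)) : pushf t f ∈ ccZ X := by
  have hpushf : ∀ g ∈ support f, pushf t f (t g) = f g := fun g hg =>
    pushf_apply_of_injOn hinj subset_rfl hg
  have hcompact : IsCompact (t '' support f) := (isCompact_support_of_mem_ccZ hf).image ht
  refine ⟨continuous_discrete_rng.2 fun m => ?_, .intro hcompact fun x hx => ?_⟩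
  · obtain rfl | hm := eq_or_ne m 0
    · have hzero : pushf t f ⁻¹' {0} = (t '' support f)ᶜ := by
        ext x
        refine ⟨?_, fun hx => not_not.1 fun hne => hx (support_pushf_subset t f hne)⟩
        rintro hx ⟨g, hg, rfl⟩
        exact hg ((hpushf g hg).symm.trans hx)
      rw [hzero]
      exact hcompact.isClosed.isOpen_compl
    · have hfibre : pushf t f ⁻¹' {m} = t '' (f ⁻¹' {m}) := by
        ext x
        constructor
        · rintro rfl
          obtain ⟨g, hg, rfl⟩ := support_pushf_subset t f hm
          exact ⟨g, (hpushf g hg).symm, rfl⟩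
        · rintro ⟨g, rfl, rfl⟩
          exact hpushf g hm
      rw [hfibre]
      exact hto _ ((isOpen_discrete _).preimage hf.1)
  · exact not_not.1 fun hne => hx (support_pushf_subset t f hne)

/-- Étale maps for which the sets of injectivity can be chosen clopen: continuous open maps
whose domain is covered by clopen sets on which the map is injective. Unlike the condition that the
domain has a basis of compact open sets, this one passes to base changes along
arbitrary continuous maps. -/
structure IsClopenEtale (t : A → X) : Prop where
  continuous : Continuous t
  isOpenMap : IsOpenMap t
  exists_isClopen_injOn : ∀ g, ∃ L, IsClopen L ∧ g ∈ L ∧ InjOn t L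

theorem exists_isCompact_isClopen_subset [T2Space A] [PrespectralSpace A] {U : Set A}
    (hU : IsOpen U) {g : A} (hg : g ∈ U) : ∃ L ⊆ U, IsCompact L ∧ IsClopen L ∧ g ∈ L :=
  let ⟨L, ⟨hLo, hLc⟩, hgL, hLU⟩ :=
    PrespectralSpace.isTopologicalBasis.exists_subset_of_mem_open hg hU
  ⟨L, hLU, hLc, ⟨hLc.isClosed, hLo⟩, hgL⟩

namespace IsClopenEtale

theorem of_isLocalHomeomorph [T2Space A] [PrespectralSpace A] (ht : IsLocalHomeomorph t) :
    IsClopenEtale t where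
  continuous := ht.continuous
  isOpenMap := ht.isOpenMap
  exists_isClopen_injOn g := by
    obtain ⟨e, hge, rfl⟩ := ht g
    obtain ⟨L, hLe, -, hL, hgL⟩ := exists_isCompact_isClopen_subset e.open_source hge
    exact ⟨L, hL, hgL, e.injOn.mono hLe⟩

theorem pullback_snd (ht : IsClopenEtale t) (hp : Continuous p) :
    IsClopenEtale (Pullback.snd : t.Pullback p → Y) where
  continuous := continuous_snd.comp continuous_subtype_val
  isOpenMap := isOpenMap_pullback_snd ht.isOpenMap hp
  exists_isClopen_injOn z := by
    obtain ⟨L, hL, hzL, hinj⟩ := ht.exists_isClopen_injOn z.fst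
    exact ⟨Pullback.fst ⁻¹' L, hL.preimage (continuous_fst.comp continuous_subtype_val), hzL,
      injOn_pullback_snd hinj⟩

theorem finite_preimage_inter_support (ht : IsClopenEtale t) (f : ccZSub A) (x : X) :
    (t ⁻¹' {x} ∩ support f.1).Finite := by
  induction f using ccZSub_induction with
  | zero => simp
  | add f f' hf hf' =>
    refine (hf.union hf').subset ?_
    rw [← inter_union_distrib_left]
    exact inter_subset_inter_right _ (support_add _ _)
  | clopen g =>
    obtain ⟨L, hL, hgL, hinj⟩ := ht.exists_isClopen_injOn g
    refine ⟨L, hL, hgL, fun f hf => Set.Subsingleton.finite ?_⟩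
    exact fun h hh k hk => hinj (hf hh.2) (hf hk.2) (hh.1.trans hk.1.symm)

theorem pushf_add (ht : IsClopenEtale t) (f f' : ccZSub A) :
    pushf t (f.1 + f'.1) = pushf t f.1 + pushf t f'.1 :=
  funext fun x => finsum_mem_add_distrib' (ht.finite_preimage_inter_support f x)
    (ht.finite_preimage_inter_support f' x)

theorem pushf_mem_ccZ [T2Space X] (ht : IsClopenEtale t) (f : ccZSub A) :
    pushf t f.1 ∈ ccZ X := by
  induction f using ccZSub_induction with
  | zero =>
    have hzero : pushf t ((0 : ccZSub A) : A → ℤ) = 0 := funext fun _ => finsum_mem_zero _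
    exact hzero ▸ (ccZSub X).zero_mem
  | add f f' hf hf' => exact ht.pushf_add f f' ▸ (ccZSub X).add_mem hf hf'
  | clopen g =>
    obtain ⟨L, hL, hgL, hinj⟩ := ht.exists_isClopen_injOn g
    exact ⟨L, hL, hgL, fun f hf =>
      pushf_mem_ccZ_of_injOn ht.continuous ht.isOpenMap f.2 (hinj.mono hf)⟩

end IsClopenEtale

end Pushforward

section FibreProduct

open scoped TensorProduct

variable {A X Y : Type*} [TopologicalSpace A] [TopologicalSpace X]
  {t : A → X} {p : Y → X} {N : AddSubgroup (Y → ℤ)}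

/-- The relations `fφ ⊗ a - f ⊗ φa` defining the tensor product of `ℤ[A]` and `N` balanced over
`ℤ[t(A)]`, where `φ` acts on `ℤ[A]` through `φ ∘ t` and on `N` through `φ ∘ p`. -/
def balancedRel (t : A → X) (p : Y → X) (N : AddSubgroup (Y → ℤ)) :
    AddSubgroup (ccZSub A ⊗[ℤ] N) :=
  .closure {z | ∃ (f f' : ccZSub A) (a a' : N) (φ : X → ℤ), φ ∈ ccZ X ∧ support φ ⊆ Set.range t ∧
    f'.1 = f.1 * φ ∘ t ∧ a'.1 = φ ∘ p * a.1 ∧ z = f' ⊗ₜ a - f ⊗ₜ a'}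

theorem balancedRel_eq_closure {S : AddSubgroup (X → ℤ)} {actA : ccZSub A → (X → ℤ) → ccZSub A}
    {actN : (X → ℤ) → N → N} (hS : ∀ φ, φ ∈ S ↔ φ ∈ ccZ X ∧ support φ ⊆ Set.range t)
    (hactA : ∀ f, ∀ φ ∈ S, (actA f φ).1 = f.1 * φ ∘ t)
    (hactN : ∀ φ ∈ S, ∀ a, (actN φ a).1 = φ ∘ p * a.1) :
    balancedRel t p N = .closure {z | ∃ f φ a, φ ∈ S ∧ z = actA f φ ⊗ₜ a - f ⊗ₜ actN φ a} := by
  refine congrArg _ (Set.ext fun z => ⟨?_, ?_⟩)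
  · rintro ⟨f, f', a, a', φ, hφ, hsupp, hf', ha', rfl⟩
    have hφS : φ ∈ S := (hS φ).2 ⟨hφ, hsupp⟩
    obtain rfl : f' = actA f φ := Subtype.ext (hf'.trans (hactA f φ hφS).symm)
    obtain rfl : a' = actN φ a := Subtype.ext (ha'.trans (hactN φ hφS a).symm)
    exact ⟨f, φ, a, hφS, rfl⟩
  · rintro ⟨f, φ, a, hφS, rfl⟩
    obtain ⟨hφ, hsupp⟩ := (hS φ).1 hφS
    exact ⟨f, _, a, _, φ, hφ, hsupp, hactA f φ hφS, hactN φ hφS a, rfl⟩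

variable [TopologicalSpace Y]

/-- `N` lies between `ℤ[U]`, embedded in `ℤ[Y]` by extension by zero, and `ℤ[Y]`. With `p : Y → X`,
`t : A → X` and `U = p⁻¹(t(A))`, this covers both `ℤ[EG_n] ⊆ (EG_n → ℤ)` and `ℤ[G⁰] ⊆ (G → ℤ)`. -/
structure IsBetweenCcZ (U : Set Y) (N : AddSubgroup (Y → ℤ)) : Prop where
  le_ccZSub : N ≤ ccZSub Y
  mem_of_support_subset : ∀ a ∈ ccZ Y, support a ⊆ U → a ∈ N

theorem isBetweenCcZ_ccZSub (U : Set Y) :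
    IsBetweenCcZ U (ccZSub Y) where
  le_ccZSub := le_rfl
  mem_of_support_subset _ ha _ := ha

theorem IsBetweenCcZ.comp_mul_mem {V : Set X} (hN : IsBetweenCcZ (p ⁻¹' V) N)
    (hp : Continuous p) {φ : X → ℤ} (hφ : Continuous φ) (hsupp : support φ ⊆ V) {a : Y → ℤ}
    (ha : a ∈ N) : φ ∘ p * a ∈ N :=
  hN.mem_of_support_subset _ (mul_mem_ccZ_right (hφ.comp hp) (hN.le_ccZSub ha)) fun _ hy =>
    hsupp (left_ne_zero_of_mul hy)

variable [T2Space X]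

theorem fst_mul_snd_mem_ccZ (ht : Continuous t) (hp : Continuous p) {f : A → ℤ} {a : Y → ℤ}
    (hf : f ∈ ccZ A) (ha : a ∈ ccZ Y) :
    (fun z : t.Pullback p => f z.fst * a z.snd) ∈ ccZ (t.Pullback p) :=
  have hclosed : IsClosed {q : A × Y | t q.1 = p q.2} :=
    isClosed_eq (ht.comp continuous_fst) (hp.comp continuous_snd)
  comp_mem_ccZ hclosed.isClosedEmbedding_subtypeVal (prod_mul_mem_ccZ hf ha)

/-- The map `ℤ[A] ⊗ N → ℤ[A ×_X Y]` sending `f ⊗ a` to `(g, y) ↦ f(g) a(y)`. -/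
def pullbackMul (ht : Continuous t) (hp : Continuous p) (hN : N ≤ ccZSub Y) :
    ccZSub A ⊗[ℤ] N →ₗ[ℤ] ccZSub (t.Pullback p) :=
  TensorProduct.lift <| LinearMap.mk₂ ℤ
    (fun f a => ⟨fun z => f.1 z.fst * a.1 z.snd, fst_mul_snd_mem_ccZ ht hp f.2 (hN a.2)⟩)
    (fun _ _ _ => Subtype.ext (funext fun _ => add_mul _ _ _))
    (fun c f a => Subtype.ext (funext fun z => smul_mul_assoc c (f.1 z.fst) (a.1 z.snd)))
    (fun _ _ _ => Subtype.ext (funext fun _ => mul_add _ _ _))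
    (fun c f a => Subtype.ext (funext fun z => mul_smul_comm c (f.1 z.fst) (a.1 z.snd)))

theorem pullbackMul_tmul (ht : Continuous t) (hp : Continuous p) (hN : N ≤ ccZSub Y)
    (f : ccZSub A) (a : N) (z : t.Pullback p) :
    (pullbackMul ht hp hN (f ⊗ₜ a)).1 z = f.1 z.fst * a.1 z.snd := rfl

theorem balancedRel_le_ker_pullbackMul (ht : Continuous t) (hp : Continuous p)
    (hN : N ≤ ccZSub Y) :
    balancedRel t p N ≤ (pullbackMul ht hp hN).toAddMonoidHom.ker := by
  refine (AddSubgroup.closure_le _).2 ?_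
  rintro _ ⟨f, f', a, a', φ, -, -, hf', ha', rfl⟩
  refine (map_sub _ _ _).trans (sub_eq_zero.2 (Subtype.ext (funext fun z => ?_)))
  change f'.1 z.fst * a.1 z.snd = f.1 z.fst * a'.1 z.snd
  rw [hf', ha']
  change f.1 z.fst * φ (t z.fst) * a.1 z.snd = f.1 z.fst * (φ (p z.snd) * a.1 z.snd)
  rw [show t z.fst = p z.snd from z.2, mul_assoc]

theorem pullbackMul_rTensor_mulCc (ht : Continuous t) (hp : Continuous p)
    (hN : N ≤ ccZSub Y) (F : ccZSub A) (x : ccZSub A ⊗[ℤ] N) (z : t.Pullback p) :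
    (pullbackMul ht hp hN ((mulCc F).rTensor N x)).1 z =
      F.1 z.fst * (pullbackMul ht hp hN x).1 z := by
  induction x with
  | zero => simp
  | tmul f a => exact mul_assoc (F.1 z.fst) _ _
  | add x y hx hy => simp [hx, hy, mul_add]

theorem exists_rTensor_mulCc_sub_mem_balancedRel (ht : Continuous t)
    (hto : IsOpenMap t) (hp : Continuous p) (hN : IsBetweenCcZ (p ⁻¹' Set.range t) N)
    {F : ccZSub A} (hinj : InjOn t (support F.1)) (x : ccZSub A ⊗[ℤ] N) :
    ∃ a : N, support a.1 ⊆ p ⁻¹' (t '' support F.1) ∧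
      (mulCc F).rTensor N x - charCc (support F.1) (isClopen_support_of_mem_ccZ F.2)
        (isCompact_support_of_mem_ccZ F.2) ⊗ₜ a ∈ balancedRel t p N := by
  induction x with
  | zero => exact ⟨0, by simp, by simp⟩
  | tmul f a =>
    have hFf : support (mulCc F f).1 ⊆ support F.1 := fun _ hg => left_ne_zero_of_mul hg
    -- `Ff = 1_{supp F} φ` for the pushforward `φ` of `Ff`, because `t` is injective on `supp F`.
    let φ : X → ℤ := pushf t (mulCc F f).1
    have hφ : φ ∈ ccZ X := pushf_mem_ccZ_of_injOn ht hto (mulCc F f).2 (hinj.mono hFf)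
    have hφF : support φ ⊆ t '' support F.1 :=
      (support_pushf_subset t _).trans (image_mono hFf)
    have hφt : support φ ⊆ Set.range t := hφF.trans (image_subset_range _ _)
    refine ⟨⟨φ ∘ p * a.1, hN.comp_mul_mem hp hφ.1 hφt a.2⟩,
      fun y hy => hφF (left_ne_zero_of_mul hy),
      AddSubgroup.subset_closure ⟨_, _, a, _, φ, hφ, hφt, funext fun g => ?_, rfl, rfl⟩⟩
    by_cases hg : g ∈ support F.1
    · simp [charCc, hg, φ, pushf_apply_of_injOn hinj hFf hg]
    · simp [charCc, hg, coe_mulCc, notMem_support.1 hg]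
  | add x y hx hy =>
    obtain ⟨a, ha, hxa⟩ := hx
    obtain ⟨b, hb, hyb⟩ := hy
    refine ⟨a + b, (support_add _ _).trans (union_subset ha hb), ?_⟩
    rw [map_add, TensorProduct.tmul_add, add_sub_add_comm]
    exact add_mem hxa hyb

theorem eq_zero_of_pullbackMul_charCc_tmul_eq_zero (ht : Continuous t)
    (hp : Continuous p) (hN : N ≤ ccZSub Y) {L : Set A} (hL : IsClopen L) (hLc : IsCompact L)
    {a : N} (ha : support a.1 ⊆ p ⁻¹' (t '' L))
    (h : pullbackMul ht hp hN (charCc L hL hLc ⊗ₜ a) = 0) : a = 0 := by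
  refine Subtype.ext (funext fun y => not_not.1 fun hy => ?_)
  obtain ⟨g, hg, hgy⟩ := ha hy
  have hz := congrFun (congrArg Subtype.val h) ⟨(g, y), hgy⟩
  refine hy ?_
  simpa [pullbackMul_tmul, charCc, Pullback.fst, Pullback.snd, hg] using hz

theorem rTensor_mulCc_mem_balancedRel (ht : IsClopenEtale t) (hp : Continuous p)
    (hN : IsBetweenCcZ (p ⁻¹' Set.range t) N) {x : ccZSub A ⊗[ℤ] N}
    (hx : pullbackMul ht.continuous hp hN.le_ccZSub x = 0) (F : ccZSub A) :
    (mulCc F).rTensor N x ∈ balancedRel t p N := by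
  induction F using ccZSub_induction with
  | zero => simp
  | add F F' hF hF' =>
    rw [map_add, LinearMap.rTensor_add]
    exact add_mem hF hF'
  | clopen g =>
    obtain ⟨L, hL, hgL, hinj⟩ := ht.exists_isClopen_injOn g
    refine ⟨L, hL, hgL, fun F hF => ?_⟩
    obtain ⟨a, ha, hxa⟩ := exists_rTensor_mulCc_sub_mem_balancedRel ht.continuous ht.isOpenMap hp
      hN (hinj.mono hF) x
    have hFx : pullbackMul ht.continuous hp hN.le_ccZSub ((mulCc F).rTensor N x) = 0 :=
      Subtype.ext (funext fun z => by rw [pullbackMul_rTensor_mulCc, hx]; exact mul_zero _)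
    have ha0 : a = 0 := by
      refine eq_zero_of_pullbackMul_charCc_tmul_eq_zero ht.continuous hp hN.le_ccZSub
        (isClopen_support_of_mem_ccZ F.2) (isCompact_support_of_mem_ccZ F.2) ha ?_
      have hker := balancedRel_le_ker_pullbackMul ht.continuous hp hN.le_ccZSub hxa
      simpa [hFx] using hker
    simpa [ha0] using hxa

theorem ker_pullbackMul (ht : IsClopenEtale t) (hp : Continuous p)
    (hN : IsBetweenCcZ (p ⁻¹' Set.range t) N) :
    (pullbackMul ht.continuous hp hN.le_ccZSub).toAddMonoidHom.ker = balancedRel t p N := by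
  refine le_antisymm (fun x hx => ?_) (balancedRel_le_ker_pullbackMul ht.continuous hp hN.le_ccZSub)
  obtain ⟨F, hF⟩ := exists_rTensor_mulCc_eq_self x
  exact hF ▸ rTensor_mulCc_mem_balancedRel ht hp hN hx F

theorem pullbackMul_surjective [T2Space A] [PrespectralSpace A] [T2Space Y]
    (ht : IsClopenEtale t) (hp : Continuous p) (hN : IsBetweenCcZ (p ⁻¹' Set.range t) N) :
    Surjective (pullbackMul ht.continuous hp hN.le_ccZSub) := by
  intro F
  induction F using ccZSub_induction with
  | zero => exact ⟨0, map_zero _⟩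
  | add F F' hF hF' =>
    obtain ⟨x, rfl⟩ := hF
    obtain ⟨y, rfl⟩ := hF'
    exact ⟨x + y, map_add _ _ _⟩
  | clopen z =>
    obtain ⟨U, hU, hzU, hUinj⟩ := ht.exists_isClopen_injOn z.fst
    obtain ⟨L, hLU, hLc, hL, hzL⟩ := exists_isCompact_isClopen_subset hU.isOpen hzU
    have hinj : InjOn (Pullback.snd : t.Pullback p → Y) (Pullback.fst ⁻¹' L) :=
      injOn_pullback_snd (hUinj.mono hLU)
    have hsnd := ht.pullback_snd hp
    refine ⟨Pullback.fst ⁻¹' L, hL.preimage (continuous_fst.comp continuous_subtype_val), hzL,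
      fun F hF => ?_⟩
    have ha : pushf Pullback.snd F.1 ∈ N := by
      refine hN.mem_of_support_subset _ (hsnd.pushf_mem_ccZ F)
        ((support_pushf_subset _ _).trans ?_)
      rintro _ ⟨w, -, rfl⟩
      exact ⟨w.fst, w.2⟩
    refine ⟨charCc L hL hLc ⊗ₜ ⟨_, ha⟩, Subtype.ext (funext fun w => ?_)⟩
    rw [pullbackMul_tmul]
    by_cases hw : w.fst ∈ L
    · simp [charCc, hw, pushf_apply_of_injOn hinj hF hw]
    · simp [charCc, hw, notMem_support.1 fun h => hw (hF h)]

/-- The isomorphism `ℤ[A] ⊗_{ℤ[t(A)]} N ≅ ℤ[A ×_X Y]` sending `f ⊗ a` to `(g, y) ↦ f(g) a(y)`. -/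
def balancedTensorEquiv [T2Space A] [PrespectralSpace A] [T2Space Y]
    (ht : IsClopenEtale t) (hp : Continuous p) (hN : IsBetweenCcZ (p ⁻¹' Set.range t) N) :
    (ccZSub A ⊗[ℤ] N) ⧸ balancedRel t p N ≃+ ccZSub (t.Pullback p) :=
  (QuotientAddGroup.quotientAddEquivOfEq (ker_pullbackMul ht hp hN).symm).trans
    (QuotientAddGroup.quotientKerEquivOfSurjective
      (pullbackMul ht.continuous hp hN.le_ccZSub).toAddMonoidHom (pullbackMul_surjective ht hp hN))

end FibreProduct

namespace GroupoidData

variable {G : Type u} {D : GroupoidData G}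

theorem convZ_eq_pushf (f' f : G → ℤ) :
    D.convZ f' f = pushf (Pullback.snd : D.range.Pullback D.range → G)
      fun q => f' q.fst * f (D.mul (D.inv q.fst) q.snd) := by
  funext g
  have hbij : BijOn (Pullback.fst : D.range.Pullback D.range → G) (Pullback.snd ⁻¹' {g})
      {h | D.range h = D.range g} :=
    ⟨fun q hq => q.2.trans (congrArg D.range hq),
      fun _ hq _ hq' hqq' => Subtype.ext (Prod.ext hqq' (Eq.trans hq (Eq.symm hq'))),
      fun h hh => ⟨⟨(h, g), hh⟩, rfl, rfl⟩⟩
  calc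
    D.convZ f' f g = ∑ᶠ h ∈ {h | D.range h = D.range g}, f' h * f (D.mul (D.inv h) g) :=
      finsum_congr fun _ => finsum_eq_if.symm
    _ = _ := (finsum_mem_eq_of_bijOn _ hbij fun _ hq => by rw [mem_singleton_iff.1 hq]).symm

variable [TopologicalSpace G]

theorem continuous_egSet_apply {n : ℕ} (i : Fin (n + 1)) :
    Continuous fun x : D.EGset n => x.1 i :=
  (continuous_apply i).comp continuous_subtype_val

theorem coe_packCc {Y : Type*} [TopologicalSpace Y] {f : Y → ℤ} (hf : f ∈ ccZ Y) :
    (packCc Y f).1 = f :=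
  congrArg Subtype.val (dif_pos hf)

theorem coe_packUnit {f : G → ℤ} (hf : f ∈ D.zUnit) : (D.packUnit f).1 = f :=
  congrArg Subtype.val (dif_pos hf)

namespace IsAmpleGroupoid

open scoped TensorProduct

theorem range_source (hD : D.IsAmpleGroupoid) : Set.range D.source = D.unitSpace :=
  Subset.antisymm (range_subset_iff.2 hD.source_mem) fun x hx => ⟨x, hD.source_unit x hx⟩

theorem mul_inv_cancel_left (hD : D.IsAmpleGroupoid) {h g : G} (hhg : D.range h = D.range g) :
    D.mul h (D.mul (D.inv h) g) = g := by
  rw [← hD.mul_assoc _ _ _ (hD.range_inv h).symm ((hD.source_inv h).trans hhg), hD.mul_inv, hhg,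
    hD.unit_mul]

theorem inv_mul_cancel_left (hD : D.IsAmpleGroupoid) {h k : G} (hhk : D.source h = D.range k) :
    D.mul (D.inv h) (D.mul h k) = k := by
  rw [← hD.mul_assoc _ _ _ (hD.source_inv h) hhk, hD.inv_mul, hhk, hD.unit_mul]

theorem range_inv_mul (hD : D.IsAmpleGroupoid) {h g : G} (hhg : D.range h = D.range g) :
    D.range (D.mul (D.inv h) g) = D.source h := by
  rw [hD.range_mul _ _ ((hD.source_inv h).trans hhg), hD.range_inv]

theorem source_inv_mul (hD : D.IsAmpleGroupoid) {h g : G} (hhg : D.range h = D.range g) :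
    D.source (D.mul (D.inv h) g) = D.source g :=
  hD.source_mul _ _ ((hD.source_inv h).trans hhg)

theorem inv_inv_mul_mul_inv_mul (hD : D.IsAmpleGroupoid) {h g k : G}
    (hhg : D.range h = D.range g) (hgk : D.range g = D.range k) :
    D.mul (D.inv (D.mul (D.inv h) g)) (D.mul (D.inv h) k) = D.mul (D.inv g) k := by
  have hcomp : D.source g = D.range (D.mul (D.inv g) k) := (hD.range_inv_mul hgk).symm
  calc
    _ = D.mul (D.inv (D.mul (D.inv h) g)) (D.mul (D.mul (D.inv h) g) (D.mul (D.inv g) k)) := by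
      rw [hD.mul_assoc _ _ _ ((hD.source_inv h).trans hhg) hcomp, hD.mul_inv_cancel_left hgk]
    _ = D.mul (D.inv g) k := hD.inv_mul_cancel_left ((hD.source_inv_mul hhg).trans hcomp)

theorem prespectralSpace (hD : D.IsAmpleGroupoid) : PrespectralSpace G :=
  .of_isTopologicalBasis (B := {B | IsOpen B ∧ IsCompact B})
    (TopologicalSpace.isTopologicalBasis_of_isOpen_of_nhds (fun _ hB => hB.1) fun g U hg hU =>
      let ⟨B, hgB, hBU, hB, hBc, _⟩ := hD.ample g U hU hg
      ⟨B, ⟨hB, hBc⟩, hgB, hBU⟩)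
    fun _ hB => hB.2

theorem isClopenEtale_source (hD : D.IsAmpleGroupoid) : IsClopenEtale D.source :=
  have := hD.t2
  have := hD.prespectralSpace
  .of_isLocalHomeomorph hD.etale_source

theorem isClopenEtale_range (hD : D.IsAmpleGroupoid) : IsClopenEtale D.range :=
  have := hD.t2
  have := hD.prespectralSpace
  .of_isLocalHomeomorph hD.etale_range

theorem continuous_mul_comp (hD : D.IsAmpleGroupoid) {Z : Type*} [TopologicalSpace Z]
    {a b : Z → G} (ha : Continuous a) (hb : Continuous b)
    (hab : ∀ z, D.source (a z) = D.range (b z)) : Continuous fun z => D.mul (a z) (b z) :=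
  hD.continuous_mul.comp ((ha.prodMk hb).subtype_mk hab)

theorem continuous_inv_mul_comp (hD : D.IsAmpleGroupoid) {Z : Type*} [TopologicalSpace Z]
    {a b : Z → G} (ha : Continuous a) (hb : Continuous b)
    (hab : ∀ z, D.range (a z) = D.range (b z)) : Continuous fun z => D.mul (D.inv (a z)) (b z) :=
  hD.continuous_mul_comp (hD.continuous_inv.comp ha) hb fun z => (hD.source_inv _).trans (hab z)

theorem continuous_egAnchor (hD : D.IsAmpleGroupoid) (n : ℕ) : Continuous (D.egAnchor n) :=
  hD.etale_range.continuous.comp (continuous_egSet_apply 0)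

/-- The homeomorphism `(h, g) ↦ (h, h⁻¹g)` from pairs of arrows with a common range to composable
pairs. -/
def shear (hD : D.IsAmpleGroupoid) : D.range.Pullback D.range ≃ₜ D.source.Pullback D.range where
  toFun q := ⟨(q.fst, D.mul (D.inv q.fst) q.snd), (hD.range_inv_mul q.2).symm⟩
  invFun q := ⟨(q.fst, D.mul q.fst q.snd), (hD.range_mul _ _ q.2).symm⟩
  left_inv q := Subtype.ext (Prod.ext rfl (hD.mul_inv_cancel_left q.2))
  right_inv q := Subtype.ext (Prod.ext rfl (hD.inv_mul_cancel_left q.2))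
  continuous_toFun :=
    have hfst : Continuous (Pullback.fst : D.range.Pullback D.range → G) :=
      continuous_fst.comp continuous_subtype_val
    (hfst.prodMk (hD.continuous_inv_mul_comp hfst (continuous_snd.comp continuous_subtype_val)
      fun q => q.2)).subtype_mk _
  continuous_invFun :=
    ((continuous_fst.comp continuous_subtype_val).prodMk hD.continuous_mul).subtype_mk _

/-- The homeomorphism `EG_0 ≃ G ×_{s, r} G⁰`, `g ↦ (g, s(g))`. -/
def egZeroHomeomorph (hD : D.IsAmpleGroupoid) : D.EGset 0 ≃ₜ D.source.Pullback id where
  toFun y := ⟨(y.1 0, D.source (y.1 0)), rfl⟩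
  invFun q := ⟨fun _ => q.fst, fun _ _ => rfl⟩
  left_inv y := Subtype.ext (funext fun i => congrArg y.1 (Fin.fin_one_eq_zero i).symm)
  right_inv q := Subtype.ext (Prod.ext rfl q.2)
  continuous_toFun :=
    ((continuous_egSet_apply 0).prodMk
      (hD.etale_source.continuous.comp (continuous_egSet_apply 0))).subtype_mk _
  continuous_invFun :=
    (continuous_pi fun _ => continuous_fst.comp continuous_subtype_val).subtype_mk _

/-- The map `(g_0, …, g_{n+1}) ↦ (g_0⁻¹g_1, …, g_0⁻¹g_{n+1})` from `EG_{n+1}` to `EG_n`. -/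
def egDehomogenize (hD : D.IsAmpleGroupoid) (n : ℕ) (y : D.EGset (n + 1)) : D.EGset n :=
  ⟨fun i => D.mul (D.inv (y.1 0)) (y.1 i.succ), fun _ _ =>
    (hD.range_inv_mul (y.2 _ _)).trans (hD.range_inv_mul (y.2 _ _)).symm⟩

/-- The map `(g, (x_0, …, x_n)) ↦ (g, gx_0, …, gx_n)` from `G ×_{s, r} EG_n` to `EG_{n+1}`. -/
def egHomogenize (hD : D.IsAmpleGroupoid) (n : ℕ) (q : D.source.Pullback (D.egAnchor n)) :
    D.EGset (n + 1) :=
  ⟨Fin.cons q.fst fun i => D.mul q.fst (q.snd.1 i), by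
    have hrange : ∀ i, D.range (D.mul q.fst (q.snd.1 i)) = D.range q.fst := fun i =>
      hD.range_mul _ _ (q.2.trans (q.snd.2 0 i))
    exact fun i j => by cases i using Fin.cases <;> cases j using Fin.cases <;> simp [hrange]⟩

/-- The homeomorphism `EG_{n+1} ≃ G ×_{s, r} EG_n`,
`(g_0, …, g_{n+1}) ↦ (g_0, (g_0⁻¹g_1, …, g_0⁻¹g_{n+1}))`. -/
def egSuccHomeomorph (hD : D.IsAmpleGroupoid) (n : ℕ) :
    D.EGset (n + 1) ≃ₜ D.source.Pullback (D.egAnchor n) where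
  toFun y := ⟨(y.1 0, hD.egDehomogenize n y), (hD.range_inv_mul (y.2 _ _)).symm⟩
  invFun := hD.egHomogenize n
  left_inv y := Subtype.ext <| funext <| Fin.cases rfl fun _ => hD.mul_inv_cancel_left (y.2 _ _)
  right_inv q := Subtype.ext <| Prod.ext rfl <| Subtype.ext <| funext fun i =>
    hD.inv_mul_cancel_left (q.2.trans (q.snd.2 0 i))
  continuous_toFun :=
    ((continuous_egSet_apply 0).prodMk ((continuous_pi fun i : Fin (n + 1) =>
      hD.continuous_inv_mul_comp (continuous_egSet_apply 0) (continuous_egSet_apply i.succ)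
        fun y => y.2 _ _).subtype_mk _)).subtype_mk _
  continuous_invFun := by
    have hfst : Continuous (Pullback.fst : D.source.Pullback (D.egAnchor n) → G) :=
      continuous_fst.comp continuous_subtype_val
    refine (continuous_pi (Fin.cases hfst fun i => ?_)).subtype_mk _
    exact hD.continuous_mul_comp hfst ((continuous_egSet_apply i).comp
      (continuous_snd.comp continuous_subtype_val)) fun q => q.2.trans (q.snd.2 0 i)

theorem convZ_mem_ccZ (hD : D.IsAmpleGroupoid) {f' f : G → ℤ} (hf' : f' ∈ ccZ G)
    (hf : f ∈ ccZ G) : D.convZ f' f ∈ ccZ G := by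
  have := hD.t2
  have hprod := comp_mem_ccZ hD.shear.isClosedEmbedding
    (fst_mul_snd_mem_ccZ hD.etale_source.continuous hD.etale_range.continuous hf' hf)
  rw [convZ_eq_pushf]
  exact (hD.isClopenEtale_range.pullback_snd hD.etale_range.continuous).pushf_mem_ccZ ⟨_, hprod⟩

theorem egTranslate_inv_apply (hD : D.IsAmpleGroupoid) {m : ℕ} {h : G} {x : D.EGset m}
    (hhx : D.range h = D.egAnchor m x) (i : Fin (m + 1)) :
    (D.egTranslate m (D.inv h) x).1 i = D.mul (D.inv h) (x.1 i) := by
  have hrange : ∀ i, D.range (D.mul (D.inv h) (x.1 i)) = D.source h := fun i =>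
    hD.range_inv_mul (hhx.trans (x.2 0 i))
  have hmem : (fun i => D.mul (D.inv h) (x.1 i)) ∈ D.EGset m := fun i j =>
    (hrange i).trans (hrange j).symm
  rw [egTranslate, dif_pos hmem]

theorem egDehomogenize_egTranslate (hD : D.IsAmpleGroupoid) {n : ℕ} {h : G}
    {y : D.EGset (n + 1)} (hhy : D.range h = D.egAnchor (n + 1) y) :
    hD.egDehomogenize n (D.egTranslate (n + 1) (D.inv h) y) = hD.egDehomogenize n y := by
  refine Subtype.ext (funext fun i => ?_)
  simp only [egDehomogenize, hD.egTranslate_inv_apply hhy]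
  exact hD.inv_inv_mul_mul_inv_mul hhy (y.2 _ _)

theorem convZ_mul_eq_egActFun (hD : D.IsAmpleGroupoid) {m : ℕ} (f' f : G → ℤ)
    {b : D.EGset m → ℤ} (hb : ∀ h x, D.range h = D.egAnchor m x →
      b (D.egTranslate m (D.inv h) x) = b x) :
    (fun y : D.EGset m => D.convZ f' f (y.1 0) * b y) =
      D.egActFun m f' fun y => f (y.1 0) * b y := by
  funext y
  rw [convZ, ← smul_eq_mul, finsum_smul, egActFun]
  refine finsum_congr fun h => ?_
  by_cases hhy : D.range h = D.range (y.1 0)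
  · have hanchor : D.range h = D.egAnchor m y := hhy
    rw [if_pos hhy, if_pos hanchor, hb h y hanchor, hD.egTranslate_inv_apply hanchor, smul_eq_mul,
      _root_.mul_assoc]
  · have hanchor : D.range h ≠ D.egAnchor m y := hhy
    rw [if_neg hhy, if_neg hanchor, zero_smul]

theorem mem_zUnit_iff (hD : D.IsAmpleGroupoid) (φ : G → ℤ) :
    φ ∈ D.zUnit ↔ φ ∈ ccZ G ∧ support φ ⊆ Set.range D.source := by
  rw [hD.range_source]
  rfl

theorem isBetweenCcZ_zUnit (hD : D.IsAmpleGroupoid) :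
    IsBetweenCcZ (id ⁻¹' Set.range D.source) D.zUnit where
  le_ccZSub _ ha := ha.1
  mem_of_support_subset a ha hsupp := (hD.mem_zUnit_iff a).2 ⟨ha, hsupp⟩

theorem tensorBaseRel_eq (hD : D.IsAmpleGroupoid) :
    D.tensorBaseRel = balancedRel D.source id D.zUnit :=
  (balancedRel_eq_closure hD.mem_zUnit_iff
    (fun f _ hφ => coe_packCc (mul_mem_ccZ_left f.2 (hφ.1.1.comp hD.etale_source.continuous)))
    fun φ hφ a => coe_packUnit (hD.isBetweenCcZ_zUnit.comp_mul_mem continuous_id hφ.1.1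
      ((hD.mem_zUnit_iff φ).1 hφ).2 a.2)).symm

theorem tensorEGRel_eq (hD : D.IsAmpleGroupoid) (n : ℕ) :
    D.tensorEGRel n = balancedRel D.source (D.egAnchor n) (ccZSub (D.EGset n)) :=
  (balancedRel_eq_closure hD.mem_zUnit_iff
    (fun f _ hφ => coe_packCc (mul_mem_ccZ_left f.2 (hφ.1.1.comp hD.etale_source.continuous)))
    fun _ hφ a => coe_packCc (mul_mem_ccZ_right (hφ.1.1.comp (hD.continuous_egAnchor n)) a.2)).symm

/-- The isomorphism `ℤ[G] ⊗_{ℤ[G⁰]} ℤ[G⁰] ≅ ℤ[EG_0]`. -/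
def tensorBaseEquiv (hD : D.IsAmpleGroupoid) : D.TensorBase ≃+ ccZSub (D.EGset 0) :=
  have := hD.t2
  have := hD.prespectralSpace
  (QuotientAddGroup.quotientAddEquivOfEq hD.tensorBaseRel_eq).trans
    ((balancedTensorEquiv hD.isClopenEtale_source continuous_id hD.isBetweenCcZ_zUnit).trans
      (ccZSubCongr hD.egZeroHomeomorph))

/-- The isomorphism `ℤ[G] ⊗_{ℤ[G⁰]} ℤ[EG_n] ≅ ℤ[EG_{n+1}]`. -/
def tensorEGEquiv (hD : D.IsAmpleGroupoid) (n : ℕ) : D.TensorEG n ≃+ ccZSub (D.EGset (n + 1)) :=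
  have := hD.t2
  have := hD.prespectralSpace
  (QuotientAddGroup.quotientAddEquivOfEq (hD.tensorEGRel_eq n)).trans
    ((balancedTensorEquiv hD.isClopenEtale_source (hD.continuous_egAnchor n)
      (isBetweenCcZ_ccZSub _)).trans (ccZSubCongr (hD.egSuccHomeomorph n)))

theorem coe_tensorBaseEquiv_tmul (hD : D.IsAmpleGroupoid) (f : ccZSub G) (a : D.zUnit) :
    (hD.tensorBaseEquiv (D.tbCls (f ⊗ₜ a))).1 = fun y => f.1 (y.1 0) * a.1 (D.source (y.1 0)) :=
  rfl

theorem coe_tensorEGEquiv_tmul (hD : D.IsAmpleGroupoid) (n : ℕ) (f : ccZSub G)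
    (a : ccZSub (D.EGset n)) : (hD.tensorEGEquiv n (D.tegCls n (f ⊗ₜ a))).1 =
      fun y => f.1 (y.1 0) * a.1 (hD.egDehomogenize n y) :=
  rfl

theorem tensorBaseEquiv_convZ (hD : D.IsAmpleGroupoid) {f' : G → ℤ} (hf' : f' ∈ ccZ G)
    (f : ccZSub G) (a : D.zUnit) :
    (hD.tensorBaseEquiv (D.tbCls (packCc G (D.convZ f' f.1) ⊗ₜ a))).1 =
      D.egActFun 0 f' (hD.tensorBaseEquiv (D.tbCls (f ⊗ₜ a))).1 := by
  rw [coe_tensorBaseEquiv_tmul, coe_tensorBaseEquiv_tmul, coe_packCc (hD.convZ_mem_ccZ hf' f.2)]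
  refine hD.convZ_mul_eq_egActFun f' f.1 fun h x hhx => congrArg a.1 ?_
  rw [hD.egTranslate_inv_apply hhx, hD.source_inv_mul hhx]

theorem tensorEGEquiv_convZ (hD : D.IsAmpleGroupoid) (n : ℕ) {f' : G → ℤ} (hf' : f' ∈ ccZ G)
    (f : ccZSub G) (a : ccZSub (D.EGset n)) :
    (hD.tensorEGEquiv n (D.tegCls n (packCc G (D.convZ f' f.1) ⊗ₜ a))).1 =
      D.egActFun (n + 1) f' (hD.tensorEGEquiv n (D.tegCls n (f ⊗ₜ a))).1 := by
  rw [coe_tensorEGEquiv_tmul, coe_tensorEGEquiv_tmul, coe_packCc (hD.convZ_mem_ccZ hf' f.2)]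
  exact hD.convZ_mul_eq_egActFun f' f.1 fun h y hhy =>
    congrArg a.1 (hD.egDehomogenize_egTranslate hhy)

end IsAmpleGroupoid

end GroupoidData

open scoped TensorProduct in
/-- Let `G` be an ample groupoid.  For every `n ≥ -1` (with the convention `EG_{-1} := G⁰`),
the map `f ⊗ a ↦ ((g_0, …, g_{n+1}) ↦ f(g_0) a(g_0⁻¹g_1, …, g_0⁻¹g_{n+1}))` is a
well-defined isomorphism of left `ℤ[G]`-modules `ℤ[G] ⊗_{ℤ[G⁰]} ℤ[EG_n] ≅ ℤ[EG_{n+1}]`. -/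
theorem tensor_iso_EG
    {G : Type u} [TopologicalSpace G] (D : GroupoidData G)
    (hAmple : D.IsAmpleGroupoid) :
    -- the case `n = -1`:  `ℤ[G] ⊗_{ℤ[G⁰]} ℤ[G⁰] ≅ ℤ[EG_0]`
    (∃ e : D.TensorBase ≃+ ↥(ccZSub ↥(D.EGset 0)),
      (∀ (f : ↥(ccZSub G)) (a : ↥(D.zUnit)),
        ((e (D.tbCls (f ⊗ₜ[ℤ] a)) : ↥(D.EGset 0) → ℤ))
          = fun y => f.1 (y.1 0) * a.1 (D.source (y.1 0))) ∧
      -- `ℤ[G]`-linearity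
      (∀ (f' : G → ℤ), f' ∈ ccZ G → ∀ (f : ↥(ccZSub G)) (a : ↥(D.zUnit)),
        ((e (D.tbCls (GroupoidData.packCc G (D.convZ f' f.1) ⊗ₜ[ℤ] a)) : ↥(D.EGset 0) → ℤ))
          = D.egActFun 0 f' (e (D.tbCls (f ⊗ₜ[ℤ] a))))) ∧
    -- the case of `n ≥ 0`:  `ℤ[G] ⊗_{ℤ[G⁰]} ℤ[EG_n] ≅ ℤ[EG_{n+1}]`
    (∀ n : ℕ, ∃ e : D.TensorEG n ≃+ ↥(ccZSub ↥(D.EGset (n + 1))),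
      (∀ (f : ↥(ccZSub G)) (a : ↥(ccZSub ↥(D.EGset n))),
        ((e (D.tegCls n (f ⊗ₜ[ℤ] a)) : ↥(D.EGset (n + 1)) → ℤ))
          = fun y => f.1 (y.1 0) *
              (if h : (fun i : Fin (n + 1) => D.mul (D.inv (y.1 0)) (y.1 i.succ)) ∈ D.EGset n
                then a.1 ⟨_, h⟩ else 0)) ∧
      (∀ (f' : G → ℤ), f' ∈ ccZ G → ∀ (f : ↥(ccZSub G)) (a : ↥(ccZSub ↥(D.EGset n))),
        ((e (D.tegCls n (GroupoidData.packCc G (D.convZ f' f.1) ⊗ₜ[ℤ] a)) : ↥(D.EGset (n + 1)) → ℤ))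
          = D.egActFun (n + 1) f' (e (D.tegCls n (f ⊗ₜ[ℤ] a))))) := by
  refine ⟨⟨hAmple.tensorBaseEquiv, hAmple.coe_tensorBaseEquiv_tmul,
    fun _ hf' => hAmple.tensorBaseEquiv_convZ hf'⟩, fun n => ⟨hAmple.tensorEGEquiv n,
    fun f a => (hAmple.coe_tensorEGEquiv_tmul n f a).trans (funext fun y => ?_),
    fun _ hf' => hAmple.tensorEGEquiv_convZ n hf'⟩⟩
  have hy : (fun i : Fin (n + 1) => D.mul (D.inv (y.1 0)) (y.1 i.succ)) ∈ D.EGset n :=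
    (hAmple.egDehomogenize n y).2
  rw [dif_pos hy]
  rfl
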